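/- Let {(X_t,y_t)}_{t≥1} and {(Z_t,w_t)}_{t≥2} be generated by the extragradient method with constant step size η_t = η ≤ min{ 1/(β_X+β_Xy), 1/(β_y+β_yX), 1/(β_X+β_yX), 1/(β_y+β_Xy) } (assuming this minimum is positive). Then for every T ≥ 1, the ergodic averages satisfy: max_{y∈K} f( (1/T)·Σ_{t=1}^T Z_{t+1}, y ) − min_{X∈S_n} f( X, (1/T)·Σ_{t=1}^T w_{t+1} ) ≤ D² / (2ηT). -/

import Mathlib

open scoped BigOperators RealInnerProductSpace
open Matrix

noncomputable section

abbrev Mat (n : ℕ) := Matrix (Fin n) (Fin n) ℝ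
abbrev Vec (m : ℕ) := EuclideanSpace ℝ (Fin m)

/-- Trace inner product `⟨A,B⟩ = Tr(AB)`. -/
def mip {n : ℕ} (A B : Mat n) : ℝ := (A * B).trace

/-- Frobenius norm. -/
def frob {n : ℕ} (A : Mat n) : ℝ := Real.sqrt (∑ i, ∑ j, (A i j) ^ 2)

/-- The set of symmetric `n × n` real matrices (the space `𝕊ⁿ`). -/
def SymM (n : ℕ) : Set (Mat n) := {X | X.IsSymm}

/-- The spectrahedron `S_n`. -/
def Spectra (n : ℕ) : Set (Mat n) := {X | X.trace = 1 ∧ X.PosSemidef}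

/-- `lam A k` : the `k`-th largest eigenvalue of a symmetric matrix `A` (1-indexed,
so `lam A 1 = λ₁(A)` is the largest and `lam A n = λₙ(A)` is the smallest);
junk value otherwise. -/
def lam {n : ℕ} (A : Mat n) (k : ℕ) : ℝ :=
  if h : k - 1 < n then
    if hA : A.IsHermitian then
      hA.eigenvalues (Tuple.sort hA.eigenvalues (Fin.rev ⟨k - 1, h⟩))
    else 0
  else 0

/-- Multiplicity of the smallest eigenvalue of `A`. -/
def multMin {n : ℕ} (A : Mat n) : ℕ :=
  letI := Classical.decPred fun k : ℕ => lam A k = lam A n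
  ((Finset.Icc 1 n).filter fun k => lam A k = lam A n).card

/-- Subdifferential of `g : 𝕊ⁿ → ℝ` at `X`. -/
def subdiff {n : ℕ} (g : Mat n → ℝ) (X : Mat n) : Set (Mat n) :=
  {G | G.IsSymm ∧ ∀ Y ∈ SymM n, g Y ≥ g X + mip G (Y - X)}

/-- Euclidean (Frobenius-norm) projection onto `C ⊆ 𝕊ⁿ`. -/
def mproj {n : ℕ} (C : Set (Mat n)) (X : Mat n) : Mat n :=
  Classical.epsilon fun P => P ∈ C ∧ ∀ Q ∈ C, frob (X - P) ≤ frob (X - Q)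

/-- Euclidean projection onto `C ⊆ ℝᵐ`. -/
def vproj {m : ℕ} (C : Set (Vec m)) (x : Vec m) : Vec m :=
  Classical.epsilon fun p => p ∈ C ∧ ∀ q ∈ C, ‖x - p‖ ≤ ‖x - q‖

/-- Norm on the product space `𝕊ⁿ × ℝᵐ`. -/
def pnorm {n m : ℕ} (X : Mat n) (y : Vec m) : ℝ := Real.sqrt (frob X ^ 2 + ‖y‖ ^ 2)

/-- Vectorization. -/
def vecz {n : ℕ} : Mat n →ₗ[ℝ] EuclideanSpace ℝ (Fin n × Fin n) where
  toFun A := WithLp.toLp 2 fun p => A p.1 p.2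
  map_add' A B := by ext p; simp
  map_smul' c A := by ext p; simp

def unvec {n : ℕ} (v : EuclideanSpace ℝ (Fin n × Fin n)) : Mat n := Matrix.of fun i j => v (i, j)

lemma unvec_vecz {n : ℕ} (A : Mat n) : unvec (vecz A) = A := by
  ext i j; simp [unvec, vecz]

lemma vecz_unvec {n : ℕ} (v : EuclideanSpace ℝ (Fin n × Fin n)) : vecz (unvec v) = v := by
  ext p; simp [unvec, vecz]

lemma frob_eq {n : ℕ} (A : Mat n) : frob A = ‖vecz A‖ := by
  rw [EuclideanSpace.norm_eq, frob, Fintype.sum_prod_type]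
  simp [vecz]

lemma mip_eq {n : ℕ} (A B : Mat n) (hA : A.IsSymm) : mip A B = ⟪vecz A, vecz B⟫ := by
  simp only [mip, Matrix.trace, Matrix.diag, Matrix.mul_apply, PiLp.inner_apply,
    Fintype.sum_prod_type, vecz, LinearMap.coe_mk, AddHom.coe_mk]
  rw [Finset.sum_comm]
  refine Finset.sum_congr rfl fun i _ => Finset.sum_congr rfl fun j _ => ?_
  rw [hA.apply]
  simp [mul_comm]

lemma spectra_symm {n : ℕ} {A : Mat n} (h : A ∈ Spectra n) : A.IsSymm := by
  have := h.2.isHermitian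
  simpa [Matrix.IsHermitian, Matrix.IsSymm] using this

lemma spectra_convex (n : ℕ) : Convex ℝ (Spectra n) := by
  intro A hA B hB a b ha hb hab
  refine ⟨?_, (hA.2.smul ha).add (hB.2.smul hb)⟩
  simp [Matrix.trace_add, Matrix.trace_smul, hA.1, hB.1, hab]

lemma spectra_closed (n : ℕ) : IsClosed (Spectra n) := by
  have : Spectra n = {A | A.trace = 1} ∩ ({A | Aᴴ = A} ∩
      ⋂ x : Fin n → ℝ, {A | 0 ≤ star x ⬝ᵥ (A *ᵥ x)}) := by
    ext A
    simp only [Spectra, Matrix.posSemidef_iff_dotProduct_mulVec, Set.mem_ofPred_eq, Set.mem_inter_iff,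
      Set.mem_iInter, Matrix.IsHermitian]
  rw [this]
  refine (isClosed_eq (by fun_prop) (by fun_prop)).inter
    ((isClosed_eq (by fun_prop) (by fun_prop)).inter (isClosed_iInter fun x => ?_))
  exact isClosed_le (by fun_prop) (by fun_prop)

lemma vimage_eq (n : ℕ) : vecz '' (Spectra n) = unvec ⁻¹' (Spectra n) := by
  ext v
  constructor
  · rintro ⟨A, hA, rfl⟩
    simpa [unvec_vecz] using hA
  · intro h
    exact ⟨unvec v, h, vecz_unvec v⟩

lemma vimage_closed (n : ℕ) : IsClosed (vecz '' (Spectra n)) := by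
  rw [vimage_eq]
  refine (spectra_closed n).preimage ?_
  unfold unvec
  refine continuous_matrix fun i j => ?_
  simp only [Matrix.of_apply]
  fun_prop

section gen
variable {E : Type*} [NormedAddCommGroup E] [InnerProductSpace ℝ E]

lemma proj_exists [CompleteSpace E] {C : Set E} (hne : C.Nonempty) (hcl : IsClosed C)
    (hcv : Convex ℝ C) (x : E) : ∃ p, p ∈ C ∧ ∀ q ∈ C, ‖x - p‖ ≤ ‖x - q‖ := by
  obtain ⟨p, hp, h⟩ := exists_norm_eq_iInf_of_complete_convex hne hcl.isComplete hcv x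
  refine ⟨p, hp, fun q hq => ?_⟩
  rw [h]
  exact ciInf_le (f := fun w : C => ‖x - w‖)
    ⟨0, Set.forall_mem_range.2 fun _ => norm_nonneg _⟩ ⟨q, hq⟩

lemma proj_inner {C : Set E} (hcv : Convex ℝ C) {x p : E} (hp : p ∈ C)
    (h : ∀ q ∈ C, ‖x - p‖ ≤ ‖x - q‖) : ∀ q ∈ C, ⟪x - p, q - p⟫ ≤ 0 := by
  refine (norm_eq_iInf_iff_real_inner_le_zero hcv hp).1 ?_
  haveI : Nonempty C := ⟨⟨p, hp⟩⟩
  refine le_antisymm (le_ciInf fun q => h q q.2) ?_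
  exact ciInf_le (f := fun w : C => ‖x - w‖)
    ⟨0, Set.forall_mem_range.2 fun _ => norm_nonneg _⟩ ⟨p, hp⟩

lemma eg_step {η : ℝ} (hη : 0 < η) {u z u' a b x : E}
    (h1 : ⟪u - η • a - z, u' - z⟫ ≤ 0) (h2 : ⟪u - η • b - u', x - u'⟫ ≤ 0) :
    η * ⟪b, z - x⟫ ≤ ‖u - x‖ ^ 2 / 2 - ‖u' - x‖ ^ 2 / 2 - ‖z - u‖ ^ 2 / 2 - ‖z - u'‖ ^ 2 / 2
      + η * (‖b - a‖ * ‖z - u'‖) := by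
  have h3 := mul_le_mul_of_nonneg_left (real_inner_le_norm (b - a) (z - u')) hη.le
  refine le_trans ?_ (add_le_add_right h3 _)
  simp only [← real_inner_self_eq_norm_sq, inner_sub_left, inner_sub_right, real_inner_smul_left] at *
  have e1 := real_inner_comm u x
  have e2 := real_inner_comm u' x
  have e3 := real_inner_comm u u'
  have e4 := real_inner_comm u z
  have e5 := real_inner_comm u' z
  have e6 := real_inner_comm x z
  nlinarith
end gen

lemma mproj_spec {n : ℕ} (hne : (Spectra n).Nonempty) (A : Mat n) :
    mproj (Spectra n) A ∈ Spectra n ∧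
      ∀ Q ∈ Spectra n, ⟪vecz A - vecz (mproj (Spectra n) A),
        vecz Q - vecz (mproj (Spectra n) A)⟫ ≤ 0 := by
  have hcv : Convex ℝ (vecz '' (Spectra n)) := (spectra_convex n).linear_image vecz
  have hex : ∃ P, P ∈ Spectra n ∧ ∀ Q ∈ Spectra n, frob (A - P) ≤ frob (A - Q) := by
    obtain ⟨p, ⟨P, hP, rfl⟩, h⟩ := proj_exists (hne.image _) (vimage_closed n) hcv (vecz A)
    refine ⟨P, hP, fun Q hQ => ?_⟩
    rw [frob_eq, frob_eq, map_sub, map_sub]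
    exact h _ ⟨Q, hQ, rfl⟩
  have hs := Classical.epsilon_spec hex
  change mproj (Spectra n) A ∈ Spectra n ∧ ∀ Q ∈ Spectra n,
    frob (A - mproj (Spectra n) A) ≤ frob (A - Q) at hs
  refine ⟨hs.1, fun Q hQ => proj_inner hcv ⟨_, hs.1, rfl⟩ ?_ _ ⟨Q, hQ, rfl⟩⟩
  rintro q ⟨R, hR, rfl⟩
  have := hs.2 R hR
  rwa [frob_eq, frob_eq, map_sub, map_sub] at this

lemma vproj_spec {m : ℕ} {K : Set (Vec m)} (hne : K.Nonempty) (hcl : IsClosed K)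
    (hcv : Convex ℝ K) (x : Vec m) :
    vproj K x ∈ K ∧ ∀ q ∈ K, ⟪x - vproj K x, q - vproj K x⟫ ≤ 0 := by
  have hs := Classical.epsilon_spec (proj_exists hne hcl hcv x)
  change vproj K x ∈ K ∧ ∀ q ∈ K, ‖x - vproj K x‖ ≤ ‖x - q‖ at hs
  exact ⟨hs.1, proj_inner hcv hs.1 hs.2⟩

lemma arith_step {βX βy βXy βyX η a b p q G H : ℝ}
    (hβX0 : 0 ≤ βX) (hβy0 : 0 ≤ βy) (hβXy0 : 0 ≤ βXy) (hβyX0 : 0 ≤ βyX) (hη0 : 0 < η)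
    (hp : 0 ≤ p) (hq : 0 ≤ q)
    (h1 : η * (βX + βXy) ≤ 1) (h2 : η * (βy + βyX) ≤ 1)
    (h3 : η * (βX + βyX) ≤ 1) (h4 : η * (βy + βXy) ≤ 1)
    (hG : G ≤ βX * a + βXy * b) (hH : H ≤ βy * b + βyX * a) :
    η * (G * p) + η * (H * q) ≤ a ^ 2 / 2 + b ^ 2 / 2 + p ^ 2 / 2 + q ^ 2 / 2 := by
  have g1 := mul_le_mul_of_nonneg_left (mul_le_mul_of_nonneg_right hG hp) hη0.le
  have g2 := mul_le_mul_of_nonneg_left (mul_le_mul_of_nonneg_right hH hq) hη0.le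
  have k1 := mul_nonneg (mul_nonneg hη0.le hβX0) (sq_nonneg (a - p))
  have k2 := mul_nonneg (mul_nonneg hη0.le hβXy0) (sq_nonneg (b - p))
  have k3 := mul_nonneg (mul_nonneg hη0.le hβy0) (sq_nonneg (b - q))
  have k4 := mul_nonneg (mul_nonneg hη0.le hβyX0) (sq_nonneg (a - q))
  have l1 := mul_le_mul_of_nonneg_right h1 (sq_nonneg p)
  have l2 := mul_le_mul_of_nonneg_right h2 (sq_nonneg q)
  have l3 := mul_le_mul_of_nonneg_right h3 (sq_nonneg a)
  have l4 := mul_le_mul_of_nonneg_right h4 (sq_nonneg b)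
  linarith

lemma step_pos {η β : ℝ} (h0 : 0 < η) (hβ : 0 ≤ β) (h : η ≤ 1 / β) : η * β ≤ 1 := by
  rcases hβ.eq_or_lt with rfl | hβ
  · simp
  · rwa [le_div_iff₀ hβ] at h

set_option maxHeartbeats 2000000 in
theorem stmt_10 {n m : ℕ} (hn : 2 ≤ n)
    (K : Set (Vec m)) (hKne : K.Nonempty) (hKcp : IsCompact K) (hKcv : Convex ℝ K)
    (f : Mat n → Vec m → ℝ)
    (gX : Mat n → Vec m → Mat n) (gY : Mat n → Vec m → Vec m)
    (hgXs : ∀ X y, (gX X y).IsSymm)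
    (hconv : ∀ y ∈ K, ∀ X ∈ SymM n, ∀ X' ∈ SymM n,
      f X' y ≥ f X y + mip (gX X y) (X' - X))
    (hconc : ∀ X ∈ Spectra n, ∀ y y' : Vec m,
      f X y' ≤ f X y + ⟪gY X y, y' - y⟫)
    (βX βy βXy βyX : ℝ) (hβX0 : 0 ≤ βX) (hβy0 : 0 ≤ βy) (hβXy0 : 0 ≤ βXy) (hβyX0 : 0 ≤ βyX)
    (hLX : ∀ X ∈ Spectra n, ∀ X' ∈ Spectra n, ∀ y ∈ K,
      frob (gX X y - gX X' y) ≤ βX * frob (X - X'))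
    (hLy : ∀ X ∈ Spectra n, ∀ y ∈ K, ∀ y' ∈ K,
      ‖gY X y - gY X y'‖ ≤ βy * ‖y - y'‖)
    (hLXy : ∀ X ∈ Spectra n, ∀ y ∈ K, ∀ y' ∈ K,
      frob (gX X y - gX X y') ≤ βXy * ‖y - y'‖)
    (hLyX : ∀ X ∈ Spectra n, ∀ X' ∈ Spectra n, ∀ y ∈ K,
      ‖gY X y - gY X' y‖ ≤ βyX * frob (X - X'))
    (η : ℝ) (hη0 : 0 < η)
    (hη1 : η ≤ 1 / (βX + βXy)) (hη2 : η ≤ 1 / (βy + βyX))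
    (hη3 : η ≤ 1 / (βX + βyX)) (hη4 : η ≤ 1 / (βy + βXy))
    (D : ℝ)
    (hD : ∀ X ∈ Spectra n, ∀ X' ∈ Spectra n, ∀ y ∈ K, ∀ y' ∈ K,
      pnorm (X - X') (y - y') ≤ D)
    (X : ℕ → Mat n) (y : ℕ → Vec m) (Z : ℕ → Mat n) (w : ℕ → Vec m)
    (hX1 : X 1 ∈ Spectra n) (hy1 : y 1 ∈ K)
    (hZrec : ∀ t, 1 ≤ t → Z (t + 1) = mproj (Spectra n) (X t - η • gX (X t) (y t)))
    (hwrec : ∀ t, 1 ≤ t → w (t + 1) = vproj K (y t + η • gY (X t) (y t)))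
    (hXrec : ∀ t, 1 ≤ t → X (t + 1) = mproj (Spectra n) (X t - η • gX (Z (t + 1)) (w (t + 1))))
    (hyrec : ∀ t, 1 ≤ t → y (t + 1) = vproj K (y t + η • gY (Z (t + 1)) (w (t + 1))))
    : ∀ T : ℕ, 1 ≤ T →
      sSup ((f ((1 / (T : ℝ)) • ∑ t ∈ Finset.Icc 1 T, Z (t + 1))) '' K)
        - sInf ((fun X => f X ((1 / (T : ℝ)) • ∑ t ∈ Finset.Icc 1 T, w (t + 1))) '' Spectra n)
        ≤ D ^ 2 / (2 * η * (T : ℝ)) := by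
  intro T hT
  have hKcl := hKcp.isClosed
  have hSne : (Spectra n).Nonempty := ⟨_, hX1⟩
  have hXY : ∀ t, 1 ≤ t → X t ∈ Spectra n ∧ y t ∈ K := by
    intro t ht
    induction t, ht using Nat.le_induction with
    | base => exact ⟨hX1, hy1⟩
    | succ t ht _ =>
      rw [hXrec t ht, hyrec t ht]
      exact ⟨(mproj_spec hSne _).1, (vproj_spec hKne hKcl hKcv _).1⟩
  have hZS : ∀ t, 1 ≤ t → Z (t + 1) ∈ Spectra n := by
    intro t ht; rw [hZrec t ht]; exact (mproj_spec hSne _).1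
  have hwK : ∀ t, 1 ≤ t → w (t + 1) ∈ K := by
    intro t ht; rw [hwrec t ht]; exact (vproj_spec hKne hKcl hKcv _).1
  have h1 := step_pos hη0 (by positivity) hη1
  have h2 := step_pos hη0 (by positivity) hη2
  have h3 := step_pos hη0 (by positivity) hη3
  have h4 := step_pos hη0 (by positivity) hη4
  -- one step
  have hstep : ∀ A ∈ Spectra n, ∀ v ∈ K, ∀ t, 1 ≤ t →
      η * (f (Z (t + 1)) v - f A (w (t + 1))) ≤
        (‖vecz (X t) - vecz A‖ ^ 2 + ‖y t - v‖ ^ 2) / 2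
        - (‖vecz (X (t + 1)) - vecz A‖ ^ 2 + ‖y (t + 1) - v‖ ^ 2) / 2 := by
    intro A hA v hv t ht
    obtain ⟨hXt, hyt⟩ := hXY t ht
    obtain ⟨hXt', hyt'⟩ := hXY (t + 1) (by omega)
    have hz := hZS t ht
    have hw := hwK t ht
    have a1 := (mproj_spec hSne (X t - η • gX (X t) (y t))).2 _ hXt'
    rw [← hZrec t ht, map_sub, map_smul] at a1
    have a2 := (mproj_spec hSne (X t - η • gX (Z (t + 1)) (w (t + 1)))).2 A hA
    rw [← hXrec t ht, map_sub, map_smul] at a2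
    have b1 := (vproj_spec hKne hKcl hKcv (y t + η • gY (X t) (y t))).2 _ hyt'
    rw [← hwrec t ht, ← sub_neg_eq_add (y t), ← smul_neg] at b1
    have b2 := (vproj_spec hKne hKcl hKcv (y t + η • gY (Z (t + 1)) (w (t + 1)))).2 v hv
    rw [← hyrec t ht, ← sub_neg_eq_add (y t), ← smul_neg] at b2
    have s1 := eg_step hη0 a1 a2
    have s2 := eg_step hη0 b1 b2
    have hG : ‖vecz (gX (Z (t + 1)) (w (t + 1))) - vecz (gX (X t) (y t))‖ ≤
        βX * ‖vecz (Z (t + 1)) - vecz (X t)‖ + βXy * ‖w (t + 1) - y t‖ := by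
      have c1 := hLX _ hz _ hXt _ hw
      have c2 := hLXy _ hXt _ hw _ hyt
      rw [frob_eq, frob_eq, map_sub, map_sub] at c1
      rw [frob_eq, map_sub] at c2
      exact (norm_sub_le_norm_sub_add_norm_sub _ (vecz (gX (X t) (w (t + 1)))) _).trans
        (add_le_add c1 c2)
    have hH : ‖-gY (Z (t + 1)) (w (t + 1)) - -gY (X t) (y t)‖ ≤
        βy * ‖w (t + 1) - y t‖ + βyX * ‖vecz (Z (t + 1)) - vecz (X t)‖ := by
      have c1 := hLyX _ hz _ hXt _ hw
      have c2 := hLy _ hXt _ hw _ hyt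
      rw [frob_eq, map_sub] at c1
      have : -gY (Z (t + 1)) (w (t + 1)) - -gY (X t) (y t)
        = -(gY (Z (t + 1)) (w (t + 1)) - gY (X t) (y t)) := by abel
      rw [this, norm_neg, add_comm (βy * _)]
      exact (norm_sub_le_norm_sub_add_norm_sub _ (gY (X t) (w (t + 1))) _).trans
        (add_le_add c1 c2)
    have hb := arith_step hβX0 hβy0 hβXy0 hβyX0 hη0
      (norm_nonneg (vecz (Z (t + 1)) - vecz (X (t + 1)))) (norm_nonneg (w (t + 1) - y (t + 1)))
      h1 h2 h3 h4 hG hH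
    have d1 := hconv _ hw _ (spectra_symm hz) _ (spectra_symm hA)
    rw [mip_eq _ _ (hgXs _ _), map_sub] at d1
    have d2 := hconc _ hz (w (t + 1)) v
    have e1 : ⟪vecz (gX (Z (t + 1)) (w (t + 1))), vecz A - vecz (Z (t + 1))⟫
        = - ⟪vecz (gX (Z (t + 1)) (w (t + 1))), vecz (Z (t + 1)) - vecz A⟫ := by
      rw [← inner_neg_right, neg_sub]
    have e2 : ⟪-gY (Z (t + 1)) (w (t + 1)), w (t + 1) - v⟫
        = ⟪gY (Z (t + 1)) (w (t + 1)), v - w (t + 1)⟫ := by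
      rw [inner_neg_left, ← inner_neg_right, neg_sub]
    rw [e1] at d1
    rw [e2] at s2
    have d3 := mul_le_mul_of_nonneg_left (add_le_add d1 d2) hη0.le
    linarith
  have hsum : ∀ A ∈ Spectra n, ∀ v ∈ K,
      η * ∑ t ∈ Finset.Icc 1 T, (f (Z (t + 1)) v - f A (w (t + 1))) ≤ D ^ 2 / 2 := by
    intro A hA v hv
    have key : ∀ N : ℕ, η * ∑ t ∈ Finset.Icc 1 N, (f (Z (t + 1)) v - f A (w (t + 1))) ≤
        (‖vecz (X 1) - vecz A‖ ^ 2 + ‖y 1 - v‖ ^ 2) / 2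
        - (‖vecz (X (N + 1)) - vecz A‖ ^ 2 + ‖y (N + 1) - v‖ ^ 2) / 2 := by
      intro N
      induction N with
      | zero => simp
      | succ N ih =>
        rw [Finset.sum_Icc_succ_top (by omega), mul_add]
        have := hstep A hA v hv (N + 1) (by omega)
        linarith
    have hd := hD _ hX1 _ hA _ hy1 _ hv
    rw [pnorm, frob_eq, map_sub] at hd
    have hd2 := (Real.sqrt_le_left (le_trans (Real.sqrt_nonneg _) hd)).1 hd
    have := key T
    have := sq_nonneg ‖vecz (X (T + 1)) - vecz A‖
    have := sq_nonneg ‖y (T + 1) - v‖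
    linarith
  have hTpos : (0 : ℝ) < T := by exact_mod_cast hT
  set Zb := (1 / (T : ℝ)) • ∑ t ∈ Finset.Icc 1 T, Z (t + 1) with hZb
  set wb := (1 / (T : ℝ)) • ∑ t ∈ Finset.Icc 1 T, w (t + 1) with hwb
  have hwt : ∑ t ∈ Finset.Icc 1 T, (1 / (T : ℝ)) = 1 := by
    simp; field_simp
  have hZbS : Zb ∈ Spectra n := by
    rw [hZb, Finset.smul_sum]
    exact (spectra_convex n).sum_mem (fun _ _ => by positivity) hwt
      fun t ht => hZS t (Finset.mem_Icc.1 ht).1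
  have hJ1 : ∀ v ∈ K, T * f Zb v ≤ ∑ t ∈ Finset.Icc 1 T, f (Z (t + 1)) v := by
    intro v hv
    have h : ∑ t ∈ Finset.Icc 1 T, (f Zb v + ⟪vecz (gX Zb v), vecz (Z (t + 1)) - vecz Zb⟫) ≤
        ∑ t ∈ Finset.Icc 1 T, f (Z (t + 1)) v := by
      refine Finset.sum_le_sum fun t ht => ?_
      have := hconv v hv _ (spectra_symm hZbS) _ (spectra_symm (hZS t (Finset.mem_Icc.1 ht).1))
      rwa [mip_eq _ _ (hgXs _ _), map_sub] at this
    have hz : ∑ t ∈ Finset.Icc 1 T, (vecz (Z (t + 1)) - vecz Zb) = 0 := by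
      have : ∑ t ∈ Finset.Icc 1 T, Z (t + 1) = (T : ℝ) • Zb := by
        rw [hZb, smul_smul, mul_one_div_cancel hTpos.ne', one_smul]
      rw [Finset.sum_sub_distrib, ← map_sum, this]
      simp [← Nat.cast_smul_eq_nsmul ℝ]
    rw [Finset.sum_add_distrib, ← inner_sum, hz] at h
    simpa using h
  have hJ2 : ∀ A ∈ Spectra n, ∑ t ∈ Finset.Icc 1 T, f A (w (t + 1)) ≤ T * f A wb := by
    intro A hA
    have h : ∑ t ∈ Finset.Icc 1 T, f A (w (t + 1)) ≤
        ∑ t ∈ Finset.Icc 1 T, (f A wb + ⟪gY A wb, w (t + 1) - wb⟫) :=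
      Finset.sum_le_sum fun t ht => hconc A hA wb _
    have hz : ∑ t ∈ Finset.Icc 1 T, (w (t + 1) - wb) = 0 := by
      have : ∑ t ∈ Finset.Icc 1 T, w (t + 1) = (T : ℝ) • wb := by
        rw [hwb, smul_smul, mul_one_div_cancel hTpos.ne', one_smul]
      rw [Finset.sum_sub_distrib, this]
      simp [← Nat.cast_smul_eq_nsmul ℝ]
    rw [Finset.sum_add_distrib, ← inner_sum, hz] at h
    simpa using h
  have hfin : ∀ A ∈ Spectra n, ∀ v ∈ K, f Zb v - f A wb ≤ D ^ 2 / (2 * η * (T : ℝ)) := by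
    intro A hA v hv
    have k := hsum A hA v hv
    rw [Finset.sum_sub_distrib] at k
    have k2 := mul_le_mul_of_nonneg_left (sub_le_sub (hJ1 v hv) (hJ2 A hA)) hη0.le
    rw [le_div_iff₀ (by positivity)]
    linarith
  rw [sub_le_iff_le_add]
  refine csSup_le (hKne.image _) ?_
  rintro _ ⟨v, hv, rfl⟩
  rw [← sub_le_iff_le_add']
  refine le_csInf (hSne.image _) ?_
  rintro _ ⟨A, hA, rfl⟩
  have := hfin A hA v hv
  simp only
  linarith
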